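/- For a single qudit of prime dimension p and any a with 1 ≤ a ≤ p−1, the group C^a_d of diagonal gates in the a-th level of the Clifford hierarchy is isomorphic to U(1) × (Z_p)^a, where the U(1) factor corresponds to global phases. -/

import Mathlib

/-!
The diagonal gates of level `k`, for `1 ≤ k ≤ p - 1`, are exactly `diag (z * ω ^ f j)` with `z` a
phase and `f` a polynomial over `ZMod p` of degree at most `k` (`diagonal_mem_cliff_iff`).

This is an induction on `k`. If a Pauli operator `P` shifts the basis by `m` and `D = diag d`, then
`D P D† = diag (d j / d (j - m)) P`, and every level is stable under right multiplication by Pauli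
operators (`cliff_mul_pauli`). So `D` lies in level `k + 1` iff its multiplicative differences lie
in level `k`. Differences lower the degree of a polynomial phase (`natDegree_sub_comp_le`).
Conversely, below degree `p - 1` every polynomial has an antidifference, as the leading coefficient
`k + 1` of `X ^ (k + 1) - (X - 1) ^ (k + 1)` is invertible (`exists_antidifference`), so a function
whose difference is a polynomial phase is itself one (`PolyPhase.of_difference`).

The isomorphism sends `(z, v)` to `diag (z * ω ^ (∑ v i * j ^ (i + 1)))`; the constant term of `f`
is absorbed by `z`. It is injective because a polynomial of degree less than `p` is determined by
its values on `ZMod p`.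
-/

open Matrix Complex

/-- Single-qudit shift gate `X |j⟩ = |j+1⟩` on a qudit of dimension `p`. -/
noncomputable def Xmat1 (p : ℕ) [NeZero p] : Matrix (ZMod p) (ZMod p) ℂ :=
  Matrix.of fun r c => if r = c + 1 then 1 else 0

/-- Single-qudit phase gate `Z |j⟩ = ω^j |j⟩`, `ω = exp(2πi/p)`. -/
noncomputable def Zmat1 (p : ℕ) [NeZero p] : Matrix (ZMod p) (ZMod p) ℂ :=
  Matrix.of fun r c =>
    if r = c then Complex.exp (2 * Real.pi * Complex.I * ((c.val : ℂ) / (p : ℂ))) else 0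

/-- The phase of the Pauli group generators: `i` if `p = 2`, `ω = exp(2πi/p)` if `p > 2`. -/
noncomputable def pauliPhase (p : ℕ) : ℂ :=
  if p = 2 then Complex.I else Complex.exp (2 * Real.pi * Complex.I / (p : ℂ))

/-- The single-qudit Pauli group `⟨iI, X, Z⟩` (`p = 2`) or `⟨ωI, X, Z⟩` (`p > 2`).
All generators have finite order, so the monoid they generate is already a group. -/
noncomputable def Pauli1 (p : ℕ) [NeZero p] : Set (Matrix (ZMod p) (ZMod p) ℂ) :=
  ↑(Submonoid.closure {pauliPhase p • (1 : Matrix (ZMod p) (ZMod p) ℂ), Xmat1 p, Zmat1 p})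

/-- The Clifford hierarchy on a single qudit:
`C^1 = {e^{iφ} P : P ∈ P}`, and `C^k = {U unitary | U P U† ∈ C^{k-1} ∀ P ∈ P}` for `k ≥ 2`. -/
noncomputable def Cliff1 (p : ℕ) [NeZero p] : ℕ → Set (Matrix (ZMod p) (ZMod p) ℂ)
  | 0 => ∅
  | 1 => {U | ∃ φ : ℝ, ∃ P ∈ Pauli1 p, U = Complex.exp (φ * Complex.I) • P}
  | (k + 2) => {U | U ∈ Matrix.unitaryGroup (ZMod p) ℂ ∧
      ∀ P ∈ Pauli1 p, U * P * Uᴴ ∈ Cliff1 p (k + 1)}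

/-- The diagonal gates in the `k`-th level of the single-qudit Clifford hierarchy. -/
noncomputable def CliffD1 (p : ℕ) [NeZero p] (k : ℕ) : Set (Matrix (ZMod p) (ZMod p) ℂ) :=
  {U | U ∈ Cliff1 p k ∧ U.IsDiag}

open Polynomial

/-! ### The Pauli group -/

/-- Up to a global phase, `d` is `ω ^ f` for a polynomial function `f` of degree at most `k`
on `ZMod p`. -/
def PolyPhase (p : ℕ) [NeZero p] (k : ℕ) (d : ZMod p → ℂ) : Prop :=
  ∃ z : ℂ, ‖z‖ = 1 ∧ ∃ f : (ZMod p)[X], f.natDegree ≤ k ∧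
    ∀ j, d j = z * ZMod.stdAddChar (f.eval j)

lemma norm_stdAddChar (p : ℕ) [NeZero p] (j : ZMod p) : ‖(ZMod.stdAddChar j : ℂ)‖ = 1 := by
  rw [ZMod.stdAddChar_apply]
  exact Circle.norm_coe _

lemma Zmat1_eq (p : ℕ) [NeZero p] :
    Zmat1 p = diagonal fun j : ZMod p => (ZMod.stdAddChar j : ℂ) := by
  ext r c
  rw [Zmat1, of_apply, diagonal_apply]
  split_ifs with h
  · rw [h, ZMod.stdAddChar_apply, ZMod.toCircle_apply]
    congr 1
    ring
  · rfl

lemma norm_pauliPhase (p : ℕ) : ‖pauliPhase p‖ = 1 := by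
  unfold pauliPhase
  split_ifs
  · simp
  · rw [show 2 * (Real.pi : ℂ) * Complex.I / (p : ℂ)
      = ((2 * Real.pi / p : ℝ) : ℂ) * Complex.I by push_cast; ring]
    exact Complex.norm_exp_ofReal_mul_I _

lemma exists_pauliPhase_pow (p : ℕ) [NeZero p] : ∃ n, pauliPhase p ^ (n + 1) = 1 := by
  unfold pauliPhase
  split_ifs
  · exact ⟨3, by simp⟩
  · refine ⟨p - 1, ?_⟩
    have hp : (p : ℂ) ≠ 0 := Nat.cast_ne_zero.2 (NeZero.ne p)
    rw [Nat.sub_add_cancel (NeZero.pos p), ← Complex.exp_nat_mul, mul_div_cancel₀ _ hp,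
      Complex.exp_two_pi_mul_I]

lemma Xmat1_pow_apply (p : ℕ) [NeZero p] (n : ℕ) (r c : ZMod p) :
    (Xmat1 p ^ n) r c = if r = c + n then 1 else 0 := by
  induction n generalizing r c with
  | zero => simp [Matrix.one_apply]
  | succ n ih =>
    rw [pow_succ, Matrix.mul_apply]
    have hX : ∀ k, Xmat1 p k c = if k = c + 1 then 1 else 0 := fun k => rfl
    simp only [ih, hX, mul_ite, mul_one, mul_zero, Finset.sum_ite_eq',
      Finset.mem_univ, if_true]
    rw [add_assoc, add_comm 1, Nat.cast_succ]

lemma Xmat1_pow_card (p : ℕ) [NeZero p] : Xmat1 p ^ p = 1 := by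
  ext r c
  rw [Xmat1_pow_apply, Matrix.one_apply]
  simp

/-- Every Pauli operator is a phase times `X ^ m * Z ^ b`, read off entrywise. -/
lemma pauli_normal_form {p : ℕ} [NeZero p] {P : Matrix (ZMod p) (ZMod p) ℂ}
    (hP : P ∈ Pauli1 p) : ∃ m b : ZMod p, ∃ c : ℂ, ‖c‖ = 1 ∧
      ∀ i j, P i j = if i = j + m then c * ZMod.stdAddChar (b * j) else 0 := by
  induction hP using Submonoid.closure_induction with
  | mem x hx =>
    rcases hx with rfl | rfl | rfl
    · exact ⟨0, 0, pauliPhase p, norm_pauliPhase p, fun i j => by simp [Matrix.one_apply]⟩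
    · exact ⟨1, 0, 1, by simp, fun i j => by simp [Xmat1]⟩
    · refine ⟨0, 1, 1, by simp, fun i j => ?_⟩
      rw [Zmat1_eq, diagonal_apply]
      by_cases h : i = j <;> simp [h]
  | one => exact ⟨0, 0, 1, by simp, fun i j => by simp [Matrix.one_apply]⟩
  | mul P Q _ _ hP hQ =>
    obtain ⟨m, b, c, hc, h⟩ := hP
    obtain ⟨m', b', c', hc', h'⟩ := hQ
    refine ⟨m' + m, b + b', c * c' * ZMod.stdAddChar (b * m'),
      by rw [norm_mul, norm_mul, hc, hc', norm_stdAddChar]; simp, fun i j => ?_⟩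
    rw [Matrix.mul_apply]
    simp only [h, h', mul_ite, mul_zero, Finset.sum_ite_eq', Finset.mem_univ, if_true]
    rw [add_assoc]
    split_ifs
    · rw [mul_add, add_mul, AddChar.map_add_eq_mul, AddChar.map_add_eq_mul]
      ring
    · simp

lemma conjTranspose_mem_of_pow {n : Type*} [Fintype n] [DecidableEq n]
    {S : Submonoid (Matrix n n ℂ)} {G : Matrix n n ℂ} (hG : G ∈ S)
    (hu : Gᴴ * G = 1) {k : ℕ} (hk : G ^ (k + 1) = 1) : Gᴴ ∈ S := by
  have : Gᴴ = G ^ k := by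
    rw [← mul_one Gᴴ, ← hk, pow_succ', ← mul_assoc, hu, one_mul]
  rw [this]
  exact pow_mem hG k

lemma diagonal_mem_unitary_iff {n : Type*} [Fintype n] [DecidableEq n] (d : n → ℂ) :
    diagonal d ∈ Matrix.unitaryGroup n ℂ ↔ ∀ j, ‖d j‖ = 1 := by
  rw [Matrix.mem_unitaryGroup_iff, star_eq_conjTranspose, diagonal_conjTranspose,
    diagonal_mul_diagonal, ← diagonal_one, diagonal_injective.eq_iff, funext_iff]
  refine forall_congr' fun j => ?_
  simp only [Pi.star_apply, RCLike.star_def, Complex.mul_conj, Complex.normSq_eq_norm_sq]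
  norm_cast
  exact pow_eq_one_iff_of_nonneg (norm_nonneg _) two_ne_zero

lemma Xmat1_unitary (p : ℕ) [NeZero p] : (Xmat1 p)ᴴ * Xmat1 p = 1 := by
  ext r c
  rw [Matrix.mul_apply]
  simp [Xmat1, Matrix.one_apply, conjTranspose_apply, eq_comm]

lemma pauli_unitary {p : ℕ} [NeZero p] {P : Matrix (ZMod p) (ZMod p) ℂ}
    (hP : P ∈ Pauli1 p) : P ∈ Matrix.unitaryGroup (ZMod p) ℂ := by
  induction hP using Submonoid.closure_induction with
  | mem x hx =>
    rcases hx with rfl | rfl | rfl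
    · rw [smul_one_eq_diagonal, diagonal_mem_unitary_iff]
      exact fun _ => norm_pauliPhase p
    · rw [Matrix.mem_unitaryGroup_iff']
      exact Xmat1_unitary p
    · rw [Zmat1_eq, diagonal_mem_unitary_iff]
      exact norm_stdAddChar p
  | one => exact one_mem _
  | mul P Q _ _ hP hQ => exact mul_mem hP hQ

/-- The monoid `Pauli1 p` is closed under inverses, since its generators are unitary of finite
order. -/
lemma pauli_conjTranspose {p : ℕ} [NeZero p] {P : Matrix (ZMod p) (ZMod p) ℂ}
    (hP : P ∈ Pauli1 p) : Pᴴ ∈ Pauli1 p := by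
  induction hP using Submonoid.closure_induction with
  | mem x hx =>
    have hm : x ∈ Pauli1 p := Submonoid.subset_closure hx
    have hu : xᴴ * x = 1 := Matrix.mem_unitaryGroup_iff'.1 (pauli_unitary hm)
    rcases hx with rfl | rfl | rfl
    · obtain ⟨n, hn⟩ := exists_pauliPhase_pow p
      exact conjTranspose_mem_of_pow hm hu (k := n) (by rw [_root_.smul_pow, hn, one_pow, one_smul])
    · refine conjTranspose_mem_of_pow hm hu (k := p - 1) ?_
      rw [Nat.sub_add_cancel (NeZero.pos p), Xmat1_pow_card]
    · refine conjTranspose_mem_of_pow hm hu (k := p - 1) ?_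
      rw [Nat.sub_add_cancel (NeZero.pos p), Zmat1_eq, diagonal_pow, ← diagonal_one]
      congr 1
      ext j
      simp [← AddChar.map_nsmul_eq_pow]
  | one =>
    rw [conjTranspose_one]
    exact one_mem (S := Submonoid _) _
  | mul P Q _ _ hP hQ =>
    rw [conjTranspose_mul]
    exact mul_mem hQ hP

/-- Each level of the hierarchy is stable under right multiplication by Pauli operators: for
`k ≥ 2`, `(U Q) P (U Q)† = U (Q P Q†) U†` with `Q P Q†` again a Pauli operator. -/
lemma cliff_mul_pauli {p : ℕ} [NeZero p] {k : ℕ} {U Q : Matrix (ZMod p) (ZMod p) ℂ}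
    (hU : U ∈ Cliff1 p k) (hQ : Q ∈ Pauli1 p) : U * Q ∈ Cliff1 p k := by
  match k, hU with
  | 1, hU =>
    obtain ⟨φ, P, hP, rfl⟩ := hU
    exact ⟨φ, P * Q, mul_mem (S := Submonoid _) hP hQ, by rw [smul_mul_assoc]⟩
  | k + 2, hU =>
    refine ⟨mul_mem hU.1 (pauli_unitary hQ), fun P hP => ?_⟩
    have := hU.2 (Q * P * Qᴴ)
      (mul_mem (S := Submonoid _) (mul_mem (S := Submonoid _) hQ hP) (pauli_conjTranspose hQ))
    rwa [conjTranspose_mul, show U * Q * P * (Qᴴ * Uᴴ) = U * (Q * P * Qᴴ) * Uᴴ by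
      simp only [mul_assoc]]

/-- Conjugating a Pauli operator that shifts by `m` by a diagonal gate multiplies it on the left
by the multiplicative difference `d j / d (j - m)`. -/
lemma diagonal_conj_shift {p : ℕ} [NeZero p] (d : ZMod p → ℂ) {P : Matrix (ZMod p) (ZMod p) ℂ}
    {m : ZMod p} (hP : ∀ i j, i ≠ j + m → P i j = 0) :
    diagonal d * P * (diagonal d)ᴴ = diagonal (fun j => d j * star (d (j - m))) * P := by
  ext i j
  rw [diagonal_conjTranspose, mul_diagonal, diagonal_mul, diagonal_mul]
  by_cases h : i = j + m
  · subst h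
    simp only [add_sub_cancel_right, Pi.star_apply]
    ring
  · rw [hP i j h]
    simp

/-! ### Finite differences of polynomials -/

lemma natDegree_sub_comp_le {R : Type*} [CommRing R] [IsDomain R] (f : R[X]) (m : R) {k : ℕ}
    (hf : f.natDegree ≤ k + 1) : (f - f.comp (X - C m)).natDegree ≤ k := by
  rcases eq_or_ne (f - f.comp (X - C m)) 0 with h0 | h0
  · simp [h0]
  have hne : f ≠ 0 := by
    rintro rfl
    simp at h0
  have hn : (f.comp (X - C m)).natDegree = f.natDegree := by simp [natDegree_comp]
  have hl : (f.comp (X - C m)).leadingCoeff = f.leadingCoeff := by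
    rw [leadingCoeff_comp (by simp)]
    simp
  have hne' : f.comp (X - C m) ≠ 0 := by
    rw [← leadingCoeff_ne_zero, hl]
    simpa using hne
  have hd : f.degree = (f.comp (X - C m)).degree := by
    rw [degree_eq_natDegree hne, degree_eq_natDegree hne', hn]
  have := natDegree_lt_natDegree h0 (degree_sub_lt_left hd hne hl.symm)
  omega

/-- A polynomial over `ZMod p` of degree at most `k < p - 1` has a discrete antiderivative of
degree at most `k + 1`. -/
lemma exists_antidifference (p : ℕ) [Fact p.Prime] (k : ℕ) (hk : k + 1 < p)
    (f : (ZMod p)[X]) (hf : f.natDegree ≤ k) :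
    ∃ g : (ZMod p)[X], g.natDegree ≤ k + 1 ∧ g - g.comp (X - C 1) = f := by
  have hlow : ∀ k : ℕ, (X ^ (k + 1) - (X ^ (k + 1) : (ZMod p)[X]).comp (X - C 1)).natDegree ≤ k :=
    fun k => natDegree_sub_comp_le _ _ (natDegree_X_pow_le _)
  have hcoe : ∀ k : ℕ, (X ^ (k + 1) - (X ^ (k + 1) : (ZMod p)[X]).comp (X - C 1)).coeff k
      = ((k + 1 : ℕ) : ZMod p) := by
    intro k
    rw [X_pow_comp, coeff_sub, coeff_X_pow, sub_eq_add_neg X, ← C_neg, coeff_X_add_C_pow]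
    simp
  -- Subtracting the right multiple of the difference of `X ^ (k + 1)` removes the top coefficient.
  have key : ∀ k : ℕ, k + 1 < p → ∀ f : (ZMod p)[X], f.natDegree ≤ k → ∃ c : ZMod p,
      (f - C c * (X ^ (k + 1) - (X ^ (k + 1) : (ZMod p)[X]).comp (X - C 1))).natDegree ≤ k ∧
      (f - C c * (X ^ (k + 1) - (X ^ (k + 1) : (ZMod p)[X]).comp (X - C 1))).coeff k = 0 := by
    intro k hk f hf
    have hk0 : ((k + 1 : ℕ) : ZMod p) ≠ 0 := by
      rw [Ne, ZMod.natCast_eq_zero_iff]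
      exact Nat.not_dvd_of_pos_of_lt (Nat.succ_pos k) hk
    refine ⟨f.coeff k / (k + 1 : ℕ), ?_, ?_⟩
    · exact (natDegree_sub_le_of_le hf ((natDegree_C_mul_le _ _).trans (hlow k))).trans (max_self k).le
    · rw [coeff_sub, coeff_C_mul, hcoe, div_mul_cancel₀ _ hk0, sub_self]
  induction k generalizing f with
  | zero =>
    obtain ⟨c, h1, h2⟩ := key 0 hk f hf
    refine ⟨C c * X ^ (0 + 1), natDegree_C_mul_X_pow_le _ _, ?_⟩
    have h3 := eq_C_of_natDegree_le_zero h1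
    rw [h2, C_0, sub_eq_zero] at h3
    rw [mul_comp, C_comp, ← mul_sub, ← h3]
  | succ k ih =>
    obtain ⟨c, h1, h2⟩ := key (k + 1) hk f hf
    obtain ⟨g, hg, hg'⟩ := ih (by omega) _ (natDegree_le_pred h1 h2)
    refine ⟨g + C c * X ^ (k + 1 + 1), natDegree_add_le_of_degree_le (by omega)
      (natDegree_C_mul_X_pow_le _ _), ?_⟩
    rw [add_comp, mul_comp, C_comp, add_sub_add_comm, hg', ← mul_sub, sub_add_cancel]

/-! ### Diagonal gates as polynomial phases -/

/-- The discrete antiderivative of a polynomial phase is a polynomial phase. After dividing by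
`ω ^ g` for an antidifference `g`, the function becomes geometric on the cycle `ZMod p`; its
ratio is then a `p`-th root of unity, contributing a linear term. -/
lemma PolyPhase.of_difference {p : ℕ} [Fact p.Prime] {k : ℕ} (hk : k + 1 < p)
    {d : ZMod p → ℂ} (hd : ∀ j, ‖d j‖ = 1)
    (h : PolyPhase p k fun j => d j * star (d (j - 1))) : PolyPhase p (k + 1) d := by
  obtain ⟨z, -, f, hf, hdf⟩ := h
  obtain ⟨g, hg, hgf⟩ := exists_antidifference p k hk f hf
  have hge : ∀ j, g.eval j = g.eval (j - 1) + f.eval j := fun j => by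
    rw [← hgf]
    simp
  have hstep : ∀ j, d j = z * ZMod.stdAddChar (f.eval j) * d (j - 1) := fun j => by
    rw [← hdf, mul_assoc, RCLike.star_def, mul_comm _ (d (j - 1)), Complex.mul_conj,
      Complex.normSq_eq_norm_sq, hd]
    simp
  have hgeo : ∀ n : ℕ, d n = d 0 * z ^ n * ZMod.stdAddChar (g.eval (n : ZMod p) - g.eval 0) := by
    intro n
    induction n with
    | zero => simp
    | succ n ih =>
      have e : ((n + 1 : ℕ) : ZMod p) - 1 = n := by push_cast; ring
      rw [hstep, e, ih, hge ((n + 1 : ℕ) : ZMod p), e, pow_succ, add_sub_right_comm, AddChar.map_add_eq_mul]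
      ring
  have hz : z ^ p = 1 := by
    have h0 : d 0 ≠ 0 := fun h => by simpa [h] using hd 0
    have := hgeo p
    simp only [CharP.cast_eq_zero, sub_self, AddChar.map_zero_eq_one, mul_one] at this
    exact (mul_left_cancel₀ h0 (this.symm.trans (mul_one _).symm))
  obtain ⟨c, hc⟩ : ∃ c : ZMod p, z = ZMod.stdAddChar c := by
    have hprim := Complex.isPrimitiveRoot_exp p (NeZero.ne p)
    obtain ⟨i, -, hi⟩ := hprim.eq_pow_of_pow_eq_one hz
    refine ⟨i, ?_⟩
    rw [← hi, ← Complex.exp_nat_mul, ← Int.cast_natCast (R := ZMod p) i,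
      ZMod.stdAddChar_coe]
    congr 1
    push_cast
    ring
  refine ⟨d 0, hd 0, g + C c * X - C (g.eval 0), ?_, fun j => ?_⟩
  · refine natDegree_sub_le_of_le (n := 0) (m := k + 1) ?_ (by simp) |>.trans (by simp)
    exact natDegree_add_le_of_degree_le hg ((natDegree_C_mul_le _ _).trans (natDegree_X_le.trans (by omega)))
  · obtain ⟨n, rfl⟩ := ZMod.natCast_zmod_surjective j
    rw [hgeo, hc, ← AddChar.map_nsmul_eq_pow, mul_assoc, ← AddChar.map_add_eq_mul]
    congr 2
    simp
    ring

lemma diagonal_mem_cliff_one_iff {p : ℕ} [NeZero p] (d : ZMod p → ℂ) :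
    diagonal d ∈ Cliff1 p 1 ↔ PolyPhase p 1 d := by
  constructor
  · rintro ⟨φ, P, hP, h⟩
    obtain ⟨m, b, c, hc, hPe⟩ := pauli_normal_form hP
    have hc0 : c ≠ 0 := fun h => by simp [h] at hc
    have hent : ∀ i j, diagonal d i j = Complex.exp (φ * Complex.I) * P i j := fun i j => by
      rw [h, Matrix.smul_apply, smul_eq_mul]
    have hm : m = 0 := by
      by_contra hm
      have := hent m 0
      rw [diagonal_apply_ne _ hm, hPe] at this
      simp [hc0] at this
    subst hm
    refine ⟨Complex.exp (φ * Complex.I) * c, ?_, C b * X, (natDegree_C_mul_le _ _).trans natDegree_X_le, fun j => ?_⟩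
    · rw [norm_mul, hc, Complex.norm_exp_ofReal_mul_I, one_mul]
    · have := hent j j
      rw [diagonal_apply_eq, hPe] at this
      simp only [add_zero, if_true] at this
      rw [this]
      simp [mul_assoc]
  · rintro ⟨z, hz, f, hf, hd⟩
    have hz1 : ‖z * ZMod.stdAddChar (f.coeff 0)‖ = 1 := by
      rw [norm_mul, hz, norm_stdAddChar, one_mul]
    obtain ⟨φ, hφ⟩ := (Complex.norm_eq_one_iff _).1 hz1
    refine ⟨φ, Zmat1 p ^ (f.coeff 1).val,
      SetLike.mem_coe.2 (pow_mem (Submonoid.subset_closure (by simp)) _), ?_⟩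
    rw [hφ, Zmat1_eq, diagonal_pow, ← diagonal_smul]
    congr 1
    ext j
    rw [hd, Pi.smul_apply, Pi.pow_apply, ← AddChar.map_nsmul_eq_pow, smul_eq_mul, mul_assoc,
      ← AddChar.map_add_eq_mul]
    congr 2
    rw [eq_X_add_C_of_natDegree_le_one hf]
    simp
    ring

/-- For `1 ≤ k ≤ p - 1`, the diagonal gates of level `k` are the polynomial phases of degree
at most `k`. -/
lemma diagonal_mem_cliff_iff {p : ℕ} [Fact p.Prime] (k : ℕ) (hk : k + 1 < p)
    (d : ZMod p → ℂ) : diagonal d ∈ Cliff1 p (k + 1) ↔ PolyPhase p (k + 1) d := by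
  induction k generalizing d with
  | zero => exact diagonal_mem_cliff_one_iff d
  | succ k ih =>
    have ih := ih (by omega)
    constructor
    · rintro ⟨hu, h⟩
      refine PolyPhase.of_difference (by omega) ((diagonal_mem_unitary_iff d).1 hu) ?_
      have hX : Xmat1 p ∈ Pauli1 p := Submonoid.subset_closure (by simp)
      rw [← ih]
      have := cliff_mul_pauli (h _ hX) (pauli_conjTranspose hX)
      rwa [diagonal_conj_shift d (m := 1) fun i j hij => by simp [Xmat1, hij], mul_assoc,
        ← star_eq_conjTranspose, Matrix.mem_unitaryGroup_iff.1 (pauli_unitary hX),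
        mul_one] at this
    · rintro ⟨z, hz, f, hf, hd⟩
      refine ⟨(diagonal_mem_unitary_iff d).2 fun j => ?_, fun P hP => ?_⟩
      · rw [hd, norm_mul, hz, norm_stdAddChar, one_mul]
      · obtain ⟨m, b, c, -, hPe⟩ := pauli_normal_form hP
        rw [diagonal_conj_shift d (m := m) fun i j hij => by rw [hPe, if_neg hij]]
        refine cliff_mul_pauli ((ih _).2 ⟨1, by simp, f - f.comp (X - C m),
          natDegree_sub_comp_le f m hf, fun j => ?_⟩) hP
        have hz2 : z * (starRingEnd ℂ) z = 1 := by
          rw [Complex.mul_conj, Complex.normSq_eq_norm_sq, hz]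
          simp
        simp only [hd, RCLike.star_def, map_mul, ← AddChar.map_neg_eq_conj, eval_sub, eval_comp,
          eval_X, eval_C, one_mul, sub_eq_add_neg (f.eval j), AddChar.map_add_eq_mul]
        linear_combination (ZMod.stdAddChar (f.eval j) * ZMod.stdAddChar (-f.eval (j - m))) * hz2

/-- The polynomial with zero constant term and coefficient `v i` in degree `i + 1`. -/
noncomputable def phasePoly {p a : ℕ} (v : Fin a → Multiplicative (ZMod p)) : (ZMod p)[X] :=
  ∑ i, C (v i).toAdd * X ^ (i.val + 1)

lemma phasePoly_natDegree {p a : ℕ} (v : Fin a → Multiplicative (ZMod p)) :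
    (phasePoly v).natDegree ≤ a :=
  natDegree_sum_le_of_forall_le _ _ fun i _ => (natDegree_C_mul_X_pow_le _ _).trans i.2

lemma phasePoly_coeff {p a : ℕ} (v : Fin a → Multiplicative (ZMod p)) (i : Fin a) :
    (phasePoly v).coeff (i + 1) = (v i).toAdd := by
  simp [phasePoly, finsetSum_coeff, coeff_X_pow, Fin.val_inj]

lemma phasePoly_eval_zero {p a : ℕ} (v : Fin a → Multiplicative (ZMod p)) :
    (phasePoly v).eval 0 = 0 := by
  simp [phasePoly, eval_finsetSum]

/-- For a single qudit of prime dimension `p` and any `a` with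
`1 ≤ a ≤ p-1`, the group `C^a_d` of diagonal gates in the `a`-th level of the Clifford
hierarchy is isomorphic to `U(1) × (Z_p)^a`, the `U(1)` factor corresponding to global
phases.  The isomorphism is expressed as a multiplicative bijection from
`Circle × (Fin a → Multiplicative (ZMod p))` onto `C^a_d` sending `(z, 1)` to `z • I`. -/
theorem diagonal_clifford_iso_low_level (p a : ℕ) [NeZero p] (hp : p.Prime)
    (ha1 : 1 ≤ a) (ha2 : a ≤ p - 1) :
    ∃ f : Circle × (Fin a → Multiplicative (ZMod p)) → Matrix (ZMod p) (ZMod p) ℂ,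
      Function.Injective f ∧ Set.range f = CliffD1 p a ∧
      (∀ x y, f (x * y) = f x * f y) ∧
      (∀ z : Circle, f (z, 1) = (z : ℂ) • (1 : Matrix (ZMod p) (ZMod p) ℂ)) := by
  have : Fact p.Prime := ⟨hp⟩
  have hp2 := hp.two_le
  refine ⟨fun x => diagonal fun j => (x.1 : ℂ) * ZMod.stdAddChar ((phasePoly x.2).eval j),
    ?_, ?_, ?_, ?_⟩
  · rintro ⟨z, v⟩ ⟨w, u⟩ h
    have h' := fun j => congrFun (diagonal_injective h) j
    simp only at h'
    have hzw : z = w := by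
      have := h' 0
      simp only [phasePoly_eval_zero, AddChar.map_zero_eq_one, mul_one] at this
      exact Circle.ext this
    subst hzw
    have heval : ∀ j, (phasePoly v).eval j = (phasePoly u).eval j := fun j =>
      ZMod.injective_stdAddChar (mul_left_cancel₀ (Circle.coe_ne_zero z) (h' j))
    -- Two polynomials of degree below `p` that agree on all of `ZMod p` are equal.
    have hpoly : phasePoly v = phasePoly u := by
      refine eq_of_natDegree_lt_card_of_eval_eq _ _ (f := (id : ZMod p → ZMod p))
        Function.injective_id heval ?_
      rw [ZMod.card]
      have := phasePoly_natDegree v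
      have := phasePoly_natDegree u
      omega
    refine Prod.ext rfl (funext fun i => ?_)
    have := congrArg (fun q => q.coeff (i + 1)) hpoly
    simpa only [phasePoly_coeff, EmbeddingLike.apply_eq_iff_eq] using this
  · obtain ⟨k, rfl⟩ : ∃ k, a = k + 1 := ⟨a - 1, by omega⟩
    have hiff := diagonal_mem_cliff_iff (p := p) k (by omega)
    ext U
    constructor
    · rintro ⟨⟨z, v⟩, rfl⟩
      exact ⟨(hiff _).2 ⟨z, Circle.norm_coe z, _, phasePoly_natDegree v, fun j => rfl⟩,
        isDiag_diagonal _⟩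
    · rintro ⟨hU, hdiag⟩
      rw [isDiag_iff_diagonal_diag] at hdiag
      rw [← hdiag] at hU ⊢
      obtain ⟨z, hz, f, hf, hd⟩ := (hiff _).1 hU
      -- The constant term of `f` is absorbed into the global phase.
      have hz1 : z * ZMod.stdAddChar (f.coeff 0) ∈ Submonoid.unitSphere ℂ := by
        rw [← SetLike.mem_coe, Submonoid.coe_unitSphere, mem_sphere_zero_iff_norm, norm_mul, hz, norm_stdAddChar, one_mul]
      refine ⟨(⟨_, hz1⟩, fun i => Multiplicative.ofAdd (f.coeff (i + 1))), ?_⟩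
      refine congrArg diagonal (funext fun j => ?_)
      rw [hd]
      simp only
      rw [mul_assoc, ← AddChar.map_add_eq_mul]
      congr 2
      rw [eval_eq_sum_range' (Nat.lt_succ_of_le hf), Finset.sum_range_succ', phasePoly,
        eval_finsetSum, ← Fin.sum_univ_eq_sum_range (fun i => f.coeff (i + 1) * j ^ (i + 1))]
      simp [add_comm]
  · rintro ⟨z, v⟩ ⟨w, u⟩
    rw [diagonal_mul_diagonal]
    refine congrArg diagonal (funext fun j => ?_)
    have : phasePoly (v * u) = phasePoly v + phasePoly u := by
      simp [phasePoly, add_mul, Finset.sum_add_distrib]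
    simp only [Prod.mk_mul_mk, this, eval_add, AddChar.map_add_eq_mul, Circle.coe_mul]
    ring
  · intro z
    rw [smul_one_eq_diagonal]
    refine congrArg diagonal (funext fun j => ?_)
    simp [phasePoly]
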